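/- Let N be a positive natural number and let λ₀, ξ, α_SI, p, p_k, σ² be positive reals, and d_k, d_t positive reals. Let a_t ∈ ℂᴺ have all entries of modulus 1, let H_r = √(λ₀ ξ)·d_t⁻²·(a_t a_tᴴ), let H_SI ∈ ℂᴺˣᴺ have all entries of modulus √(α_SI), and let x = √(p/N)·a_t. Then ‖H_r x‖² / (λ₀ p_k N d_k⁻² + ‖H_SI x‖² + N σ²) ≥ (λ₀ ξ N p d_t⁻⁴)/(λ₀ p_k d_k⁻² + α_SI N p + σ²). -/

import Mathlib

open scoped BigOperators

/-- The Euclidean (ℓ²) norm of a complex vector indexed by `Fin N`. -/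
noncomputable def euclNorm {N : ℕ} (v : Fin N → ℂ) : ℝ :=
  Real.sqrt (∑ i, ‖v i‖ ^ 2)

/-!
A beam matched to the transmit steering vector `a_t` has power `p`, and the rank-one channel
`a_r a_tᴴ` returns it along the receive steering vector `a_r`, with power amplified by
`‖a_t‖² ‖a_r‖²`. By Cauchy–Schwarz, the self-interference channel passes at most its Frobenius
energy times `p`. Echo and interference then both carry one factor for the number of receive
antennas, which cancels in the ratio.
-/

open Matrix

section EuclideanNorm

variable {M N : ℕ}

theorem euclNorm_sq (v : Fin N → ℂ) : euclNorm v ^ 2 = ∑ i, ‖v i‖ ^ 2 :=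
  Real.sq_sqrt (Finset.sum_nonneg fun _ _ => sq_nonneg _)

theorem euclNorm_smul_sq (c : ℂ) (v : Fin N → ℂ) :
    euclNorm (c • v) ^ 2 = ‖c‖ ^ 2 * euclNorm v ^ 2 := by
  simp only [euclNorm_sq, Pi.smul_apply, norm_smul, mul_pow, Finset.mul_sum]

theorem euclNorm_sq_of_forall_norm_eq {v : Fin N → ℂ} {r : ℝ} (hv : ∀ i, ‖v i‖ = r) :
    euclNorm v ^ 2 = N * r ^ 2 := by
  simp [euclNorm_sq, hv]

theorem sum_euclNorm_row_sq_of_forall_norm_eq {A : Matrix (Fin M) (Fin N) ℂ} {r : ℝ}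
    (hA : ∀ i j, ‖A i j‖ = r) : ∑ i, euclNorm (A i) ^ 2 = M * N * r ^ 2 := by
  simp [euclNorm_sq_of_forall_norm_eq (hA _), mul_assoc]

theorem star_dotProduct_self_eq_euclNorm_sq (v : Fin N → ℂ) :
    star v ⬝ᵥ v = ((euclNorm v ^ 2 : ℝ) : ℂ) := by
  simp [euclNorm_sq, dotProduct, Complex.conj_mul']

theorem euclNorm_smul_vecMulVec_star_mulVec_smul_sq (c s : ℂ) (u : Fin M → ℂ) (v : Fin N → ℂ) :
    euclNorm ((c • vecMulVec u (star v)) *ᵥ (s • v)) ^ 2 =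
      ‖c‖ ^ 2 * ‖s‖ ^ 2 * (euclNorm v ^ 2) ^ 2 * euclNorm u ^ 2 := by
  have hmatched : (c • vecMulVec u (star v)) *ᵥ (s • v) =
      (c * s * ((euclNorm v ^ 2 : ℝ) : ℂ)) • u := by
    rw [smul_mulVec, mulVec_smul, vecMulVec_mulVec, star_dotProduct_self_eq_euclNorm_sq,
      op_smul_eq_smul, smul_smul, smul_smul, mul_assoc]
  rw [hmatched, euclNorm_smul_sq, norm_mul, norm_mul, Complex.norm_real, mul_pow, mul_pow,
    Real.norm_of_nonneg (sq_nonneg _)]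

theorem norm_dotProduct_sq_le_euclNorm_sq_mul (v w : Fin N → ℂ) :
    ‖v ⬝ᵥ w‖ ^ 2 ≤ euclNorm v ^ 2 * euclNorm w ^ 2 :=
  calc ‖v ⬝ᵥ w‖ ^ 2 ≤ (∑ i, ‖v i‖ * ‖w i‖) ^ 2 := by
        gcongr
        exact norm_sum_le_of_le _ fun i _ => norm_mul_le (v i) (w i)
    _ ≤ (∑ i, ‖v i‖ ^ 2) * ∑ i, ‖w i‖ ^ 2 := Finset.sum_mul_sq_le_sq_mul_sq _ _ _
    _ = euclNorm v ^ 2 * euclNorm w ^ 2 := by rw [euclNorm_sq, euclNorm_sq]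

theorem euclNorm_mulVec_sq_le (A : Matrix (Fin M) (Fin N) ℂ) (x : Fin N → ℂ) :
    euclNorm (A *ᵥ x) ^ 2 ≤ (∑ i, euclNorm (A i) ^ 2) * euclNorm x ^ 2 := by
  rw [euclNorm_sq (A *ᵥ x), Finset.sum_mul]
  exact Finset.sum_le_sum fun i _ => norm_dotProduct_sq_le_euclNorm_sq_mul (A i) x

end EuclideanNorm

theorem norm_ofReal_sqrt_sq {r : ℝ} (hr : 0 ≤ r) : ‖(Real.sqrt r : ℂ)‖ ^ 2 = r := by
  rw [Complex.norm_real, Real.norm_eq_abs, sq_abs, Real.sq_sqrt hr]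

section Sensing

variable {M N : ℕ} {p : ℝ} {a_t : Fin N → ℂ}

theorem euclNorm_beam_sq (hN : 0 < N) (hp : 0 ≤ p) (hat : euclNorm a_t ^ 2 = N) :
    euclNorm ((Real.sqrt (p / N) : ℂ) • a_t) ^ 2 = p := by
  rw [euclNorm_smul_sq, norm_ofReal_sqrt_sq (by positivity), hat]
  field_simp

theorem euclNorm_echo_sq {g d : ℝ} {a_r : Fin M → ℂ} (hN : 0 < N) (hp : 0 ≤ p) (hg : 0 ≤ g)
    (hat : euclNorm a_t ^ 2 = N) (har : euclNorm a_r ^ 2 = M) :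
    euclNorm ((((Real.sqrt g / d ^ 2 : ℝ) : ℂ) • vecMulVec a_r (star a_t)) *ᵥ
      ((Real.sqrt (p / N) : ℂ) • a_t)) ^ 2 = M * (g * N * p / d ^ 4) := by
  have hgain : ‖((Real.sqrt g / d ^ 2 : ℝ) : ℂ)‖ ^ 2 = g / d ^ 4 := by
    rw [Complex.norm_real, Real.norm_eq_abs, sq_abs, div_pow, Real.sq_sqrt hg, ← pow_mul]
  rw [euclNorm_smul_vecMulVec_star_mulVec_smul_sq, hgain, norm_ofReal_sqrt_sq (by positivity),
    hat, har]
  field_simp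

end Sensing

theorem sensing_sinr_lower_bound_general (M N : ℕ) (hM : 0 < M) (hN : 0 < N)
    (lam0 xi alphaSI p pk sigma2 dk dt : ℝ)
    (hlam0 : 0 < lam0) (hxi : 0 < xi) (hp : 0 < p)
    (hpk : 0 < pk) (hsigma2 : 0 < sigma2) (hdk : 0 < dk) (hdt : 0 < dt)
    (a_r : Fin M → ℂ) (har : euclNorm a_r ^ 2 = M)
    (a_t : Fin N → ℂ) (hat : euclNorm a_t ^ 2 = N)
    (Hr HSI : Matrix (Fin M) (Fin N) ℂ)
    (hHr : Hr = ((Real.sqrt (lam0 * xi) / dt ^ 2 : ℝ) : ℂ) • vecMulVec a_r (star a_t))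
    (hHSI : ∑ i, euclNorm (HSI i) ^ 2 ≤ M * N * alphaSI)
    (x : Fin N → ℂ) (hx : x = (Real.sqrt (p / N) : ℂ) • a_t) :
    (lam0 * xi * N * p / dt ^ 4) / (lam0 * pk / dk ^ 2 + alphaSI * N * p + sigma2) ≤
      euclNorm (Hr *ᵥ x) ^ 2 /
        (lam0 * pk * M / dk ^ 2 + euclNorm (HSI *ᵥ x) ^ 2 + M * sigma2) := by
  have hpower : euclNorm x ^ 2 = p := hx ▸ euclNorm_beam_sq hN hp.le hat
  have hecho : euclNorm (Hr *ᵥ x) ^ 2 = M * (lam0 * xi * N * p / dt ^ 4) := by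
    rw [hHr, hx, euclNorm_echo_sq hN hp.le (by positivity) hat har]
  have hself : euclNorm (HSI *ᵥ x) ^ 2 ≤ M * N * alphaSI * p :=
    hpower ▸ (euclNorm_mulVec_sq_le HSI x).trans (by gcongr)
  have hinterference : lam0 * pk * M / dk ^ 2 + euclNorm (HSI *ᵥ x) ^ 2 + M * sigma2 ≤
      M * (lam0 * pk / dk ^ 2 + alphaSI * N * p + sigma2) := by
    linear_combination hself
  have hMpos : (0 : ℝ) < M := Nat.cast_pos.2 hM
  rw [hecho, ← mul_div_mul_left _ _ hMpos.ne']
  exact div_le_div_of_nonneg_left (by positivity) (by positivity) hinterference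

/-- Lower bound `γ̃_k^rad ≥ γ_k^rad` on the radar sensing SINR. -/
theorem sensing_sinr_lower_bound (N : ℕ) (hN : 0 < N)
    (lam0 xi alphaSI p pk sigma2 dk dt : ℝ)
    (hlam0 : 0 < lam0) (hxi : 0 < xi) (halphaSI : 0 < alphaSI) (hp : 0 < p)
    (hpk : 0 < pk) (hsigma2 : 0 < sigma2) (hdk : 0 < dk) (hdt : 0 < dt)
    (a_t : Fin N → ℂ) (hat : ∀ i, ‖a_t i‖ = 1)
    (Hr HSI : Matrix (Fin N) (Fin N) ℂ)
    (hHr : Hr = ((Real.sqrt (lam0 * xi) / dt ^ 2 : ℝ) : ℂ) •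
      Matrix.vecMulVec a_t (star a_t))
    (hHSI : ∀ i j, ‖HSI i j‖ = Real.sqrt alphaSI)
    (x : Fin N → ℂ) (hx : x = (Real.sqrt (p / N) : ℂ) • a_t) :
    euclNorm (Hr.mulVec x) ^ 2 /
        (lam0 * pk * N / dk ^ 2 + euclNorm (HSI.mulVec x) ^ 2 + N * sigma2) ≥
      (lam0 * xi * N * p / dt ^ 4) /
        (lam0 * pk / dk ^ 2 + alphaSI * N * p + sigma2) := by
  have hat_energy : euclNorm a_t ^ 2 = N := by simp [euclNorm_sq_of_forall_norm_eq hat]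
  have hHSI_energy : ∑ i, euclNorm (HSI i) ^ 2 = N * N * alphaSI := by
    rw [sum_euclNorm_row_sq_of_forall_norm_eq hHSI, Real.sq_sqrt halphaSI.le]
  exact sensing_sinr_lower_bound_general N N hN hN lam0 xi alphaSI p pk sigma2 dk dt hlam0 hxi hp
    hpk hsigma2 hdk hdt a_t hat_energy a_t hat_energy Hr HSI hHr hHSI_energy.le x hx
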